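/- Let S be an arbitrary topological space and let M^a_1(S) denote the set of functionals μ in the topological dual of C_b(S,ℝ) with operator norm one and μ(f) ≥ 0 for every f ≥ 0. For μ ∈ M^a_1(S), the following are equivalent: (i) μ is an extreme point of M^a_1(S); (ii) μ is an exposed point of M^a_1(S), i.e. there exists a functional ξ in the bidual C_b(S,ℝ)** which attains its strict minimum on M^a_1(S) at μ; (iii) there exists a functional ξ ∈ C_b(S,ℝ)** with ξ(μ) = 0 and ξ(ν) > 0 for every ν ∈ M^a_1(S) \ {μ}. -/

import Mathlib

open BoundedContinuousFunction

/-- `M^a_1(S)`: the norm-one positive functionals on `C_b(S,ℝ)`. -/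
def Ma1S (S : Type*) [TopologicalSpace S] : Set ((S →ᵇ ℝ) →L[ℝ] ℝ) :=
  {μ | ‖μ‖ = 1 ∧ ∀ f : S →ᵇ ℝ, 0 ≤ f → 0 ≤ μ f}

/-!
The functions `0 ≤ g ≤ 1` with `μ g = 0` form an upward directed, norm-bounded set, so the
evaluations at them accumulate weak-* at some `ξ` in the bidual; then `ξ μ = 0`, and `ξ ν ≥ ν g`
for every positive `ν` and every such `g`. If `μ` is extreme, perturbing the density `1` to
`1 ± ε h` shows that `μ h = 0` forces `μ (h * f) = 0` for all `f`, whence `μ (h * h) = 0`. For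
`ν ≠ μ` choose `f` with `ν f ≠ μ f` and put `h = f - μ f`: a small multiple of `h * h` is a null
function of `μ` lying between `0` and `1`, and it is charged by `ν` because
`ν (h * h) ≥ (ν h) ^ 2 > 0`.
-/

theorem mem_exposedPoints_iff_exists_lt {𝕜 E : Type*} [Ring 𝕜] [LinearOrder 𝕜]
    [IsOrderedAddMonoid 𝕜] [TopologicalSpace 𝕜] [IsTopologicalAddGroup 𝕜] [AddCommGroup E]
    [TopologicalSpace E] [Module 𝕜 E] {K : Set E} {x : E} :
    x ∈ K.exposedPoints 𝕜 ↔ x ∈ K ∧ ∃ ξ : StrongDual 𝕜 E, ∀ y ∈ K, y ≠ x → ξ x < ξ y := by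
  refine and_congr_right fun _ => ⟨fun ⟨l, hl⟩ => ⟨-l, fun y hy hne => ?_⟩,
    fun ⟨ξ, hξ⟩ => ⟨-ξ, fun y hy => ?_⟩⟩
  · exact neg_lt_neg (lt_of_not_ge fun h => hne ((hl y hy).2 h))
  · rcases eq_or_ne y x with rfl | hne
    · exact ⟨le_rfl, fun _ => rfl⟩
    · have hlt : (-ξ) y < (-ξ) x := neg_lt_neg (hξ y hy hne)
      exact ⟨hlt.le, fun h => absurd h hlt.not_ge⟩

section Bidual

open Set Filter Topology

variable {E : Type*} [SeminormedAddCommGroup E] [NormedSpace ℝ E]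

theorem exists_bidual_tendsto_ultrafilter {D : Set E} (hD : Bornology.IsBounded D)
    (U : Ultrafilter D) :
    ∃ ξ : StrongDual ℝ (StrongDual ℝ E),
      ∀ ν : StrongDual ℝ E, Tendsto (fun g : D => ν g) U (𝓝 (ξ ν)) := by
  obtain ⟨C, hC⟩ := hD.exists_norm_le
  let ev : D → WeakDual ℝ (StrongDual ℝ E) := fun g =>
    StrongDual.toWeakDual (NormedSpace.inclusionInDoubleDual ℝ E g)
  have ev_mem_ball (g : D) :
      ev g ∈ WeakDual.toStrongDual ⁻¹' Metric.closedBall (0 : StrongDual ℝ (StrongDual ℝ E)) C :=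
    mem_closedBall_zero_iff (E := StrongDual ℝ (StrongDual ℝ E)).2
      ((NormedSpace.double_dual_bound ℝ E g).trans (hC g g.2))
  obtain ⟨ξ, -, hξ⟩ := (WeakDual.isCompact_closedBall (𝕜 := ℝ) 0 C).ultrafilter_le_nhds
    (U.map ev) (le_principal_iff.2 (mem_map.2 (univ_mem' ev_mem_ball)))
  exact ⟨WeakDual.toStrongDual ξ, fun ν => ((WeakDual.eval_continuous ν).tendsto ξ).comp hξ⟩

theorem exists_bidual_isLUB_image [Preorder E] {D : Set E} (hne : D.Nonempty)
    (hdir : DirectedOn (· ≤ ·) D) (hD : Bornology.IsBounded D) :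
    ∃ ξ : StrongDual ℝ (StrongDual ℝ E),
      ∀ ν : StrongDual ℝ E, Monotone ν → IsLUB (ν '' D) (ξ ν) := by
  have : Nonempty D := hne.to_subtype
  have : IsDirectedOrder D := ⟨directedOn_iff_directed.1 hdir⟩
  let U : Ultrafilter D := Ultrafilter.of atTop
  obtain ⟨ξ, hξ⟩ := exists_bidual_tendsto_ultrafilter hD U
  refine ⟨ξ, fun ν hν => ⟨?_, fun b hb => ?_⟩⟩
  · rintro _ ⟨g, hg, rfl⟩
    have hev : ∀ᶠ k : D in U, ν g ≤ ν k :=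
      Ultrafilter.of_le atTop ((eventually_ge_atTop (⟨g, hg⟩ : D)).mono fun _ hk => hν hk)
    exact ge_of_tendsto (hξ ν) hev
  · exact le_of_tendsto (hξ ν) (.of_forall fun g => hb (mem_image_of_mem ν g.2))

end Bidual

section Lattice

open Set

theorem directedOn_null_Icc {E M F : Type*} [AddCommGroup E] [Lattice E] [IsOrderedAddMonoid E]
    [AddMonoid M] [PartialOrder M] [FunLike F E M] [AddMonoidHomClass F E M] {φ : F}
    (hφ : Monotone φ) (u : E) : DirectedOn (· ≤ ·) {g ∈ Icc 0 u | φ g = 0} := by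
  rintro g ⟨⟨hg0, hgu⟩, hφg⟩ h ⟨⟨hh0, hhu⟩, hφh⟩
  have hsup_le : g ⊔ h ≤ g + h :=
    sup_le (le_add_of_nonneg_right hh0) (le_add_of_nonneg_left hg0)
  have hsup_nonneg : 0 ≤ g ⊔ h := hg0.trans le_sup_left
  refine ⟨g ⊔ h, ⟨⟨hsup_nonneg, sup_le hgu hhu⟩, le_antisymm ?_ ?_⟩, le_sup_left, le_sup_right⟩
  · simpa only [map_add, hφg, hφh, add_zero] using hφ hsup_le
  · simpa only [map_zero] using hφ hsup_nonneg

variable {E : Type*} [NormedAddCommGroup E] [Lattice E] [IsOrderedAddMonoid E] [HasSolidNorm E]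

theorem isBounded_Icc_zero (u : E) : Bornology.IsBounded (Icc 0 u) := by
  refine isBounded_iff_forall_norm_le.2 ⟨‖u‖, fun g hg => norm_le_norm_of_abs_le_abs ?_⟩
  rw [abs_of_nonneg hg.1, abs_of_nonneg (hg.1.trans hg.2)]
  exact hg.2

theorem exists_bidual_dominating_null [NormedSpace ℝ E] {μ : StrongDual ℝ E} (hμ : Monotone μ)
    {u : E} (hu : 0 ≤ u) :
    ∃ ξ : StrongDual ℝ (StrongDual ℝ E), ξ μ = 0 ∧
      ∀ ν : StrongDual ℝ E, Monotone ν → ∀ g ∈ Icc 0 u, μ g = 0 → ν g ≤ ξ ν := by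
  have hzero : (0 : E) ∈ {g ∈ Icc 0 u | μ g = 0} := ⟨left_mem_Icc.2 hu, map_zero μ⟩
  obtain ⟨ξ, hξ⟩ := exists_bidual_isLUB_image ⟨0, hzero⟩ (directedOn_null_Icc hμ u)
    ((isBounded_Icc_zero u).subset (sep_subset _ _))
  refine ⟨ξ, le_antisymm ((hξ μ hμ).2 ?_) ((hξ μ hμ).1 ⟨0, hzero, map_zero μ⟩), ?_⟩
  · rintro _ ⟨g, hg, rfl⟩
    exact hg.2.le
  · exact fun ν hν g hg hμg => (hξ ν hν).1 ⟨g, ⟨hg, hμg⟩, rfl⟩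

end Lattice

section PositiveFunctional

variable {S : Type*} [TopologicalSpace S]

instance : ZeroLEOneClass (S →ᵇ ℝ) := ⟨fun _ => zero_le_one⟩

theorem le_norm_smul_one (f : S →ᵇ ℝ) : f ≤ ‖f‖ • (1 : S →ᵇ ℝ) := fun x => by
  simpa using f.apply_le_norm x

theorem zero_le_mul_self (f : S →ᵇ ℝ) : 0 ≤ f * f := fun x => mul_self_nonneg (f x)

theorem opNorm_eq_apply_one_of_monotone {ν : (S →ᵇ ℝ) →L[ℝ] ℝ} (hν : Monotone ν) :
    ‖ν‖ = ν 1 := by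
  have hν1 : 0 ≤ ν 1 := by simpa only [map_zero] using hν zero_le_one
  have apply_le (f : S →ᵇ ℝ) : ν f ≤ ν 1 * ‖f‖ := by
    simpa only [map_smul, smul_eq_mul, mul_comm] using hν (le_norm_smul_one f)
  have norm_one_le : ‖(1 : S →ᵇ ℝ)‖ ≤ 1 := (norm_le zero_le_one).2 fun _ => norm_one.le
  refine le_antisymm (ν.opNorm_le_bound hν1 fun f => abs_le'.2 ⟨apply_le f, ?_⟩)
    ((le_abs_self _).trans (ν.unit_le_opNorm 1 norm_one_le))
  simpa only [map_neg, norm_neg] using apply_le (-f)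

end PositiveFunctional

namespace Ma1S

open Set

variable {S : Type*} [TopologicalSpace S] {μ ν : (S →ᵇ ℝ) →L[ℝ] ℝ}

theorem mem_iff : ν ∈ Ma1S S ↔ ν 1 = 1 ∧ Monotone ν := by
  rw [Ma1S, mem_ofPred_eq, ← monotone_iff_map_nonneg]
  exact and_congr_left fun hν => by rw [opNorm_eq_apply_one_of_monotone hν]

theorem comp_mul_mem (hμ : μ ∈ Ma1S S) {k : S →ᵇ ℝ} (hk : 0 ≤ k) (hμk : μ k = 1) :
    μ ∘L ContinuousLinearMap.mul ℝ (S →ᵇ ℝ) k ∈ Ma1S S := by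
  refine mem_iff.2 ⟨by simpa using hμk, fun f g hfg => (mem_iff.1 hμ).2 fun x => ?_⟩
  exact mul_le_mul_of_nonneg_left (hfg x) (hk x)

theorem map_mul_eq_zero_of_mem_extremePoints (hμ : μ ∈ (Ma1S S).extremePoints ℝ)
    {h : S →ᵇ ℝ} (hμh : μ h = 0) (f : S →ᵇ ℝ) : μ (h * f) = 0 := by
  obtain ⟨ε, hε, hεh⟩ := exists_pos_mul_lt one_pos ‖h‖
  have hμ1 : μ 1 = 1 := (mem_iff.1 hμ.1).1
  have hbound (x : S) : |ε * h x| ≤ 1 := by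
    rw [abs_mul, abs_of_pos hε, mul_comm]
    exact (mul_le_mul_of_nonneg_right (h.norm_coe_le_norm x) hε.le).trans hεh.le
  have hadd : μ ∘L ContinuousLinearMap.mul ℝ (S →ᵇ ℝ) (1 + ε • h) ∈ Ma1S S :=
    comp_mul_mem hμ.1 (fun x => neg_le_iff_add_nonneg'.1 (neg_le_of_abs_le (hbound x)))
      (by simp [hμ1, hμh])
  have hsub : μ ∘L ContinuousLinearMap.mul ℝ (S →ᵇ ℝ) (1 - ε • h) ∈ Ma1S S :=
    comp_mul_mem hμ.1 (fun x => sub_nonneg.2 (le_of_abs_le (hbound x))) (by simp [hμ1, hμh])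
  have hmid : μ ∈ openSegment ℝ (μ ∘L ContinuousLinearMap.mul ℝ (S →ᵇ ℝ) (1 + ε • h))
      (μ ∘L ContinuousLinearMap.mul ℝ (S →ᵇ ℝ) (1 - ε • h)) := by
    refine ⟨1 / 2, 1 / 2, by norm_num, by norm_num, by norm_num, ?_⟩
    ext f
    change 1 / 2 * μ ((1 + ε • h) * f) + 1 / 2 * μ ((1 - ε • h) * f) = μ f
    rw [add_mul, sub_mul, one_mul, map_add, map_sub]
    ring
  have hfix : μ ((1 + ε • h) * f) = μ f := DFunLike.congr_fun (hμ.2 hadd hsub hmid) f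
  rw [add_mul, one_mul, smul_mul_assoc, map_add, map_smul, add_eq_left, smul_eq_mul] at hfix
  exact (mul_eq_zero.1 hfix).resolve_left hε.ne'

theorem apply_sub_smul_one (hν : ν ∈ Ma1S S) (f : S →ᵇ ℝ) (c : ℝ) :
    ν (f - c • (1 : S →ᵇ ℝ)) = ν f - c := by
  rw [map_sub, map_smul, (mem_iff.1 hν).1, smul_eq_mul, mul_one]

theorem sq_apply_le_apply_mul_self (hν : ν ∈ Ma1S S) (f : S →ᵇ ℝ) : ν f ^ 2 ≤ ν (f * f) := by
  set g : S →ᵇ ℝ := f - ν f • 1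
  have hvar : 0 ≤ ν (g * g) := hν.2 _ (zero_le_mul_self g)
  have hexpand : f * f = g * g + (2 * ν f) • f - (ν f ^ 2) • (1 : S →ᵇ ℝ) := by
    ext x
    simp only [coe_mul, Pi.mul_apply, coe_sub, coe_add, coe_smul, coe_one, Pi.one_apply,
      smul_eq_mul, mul_one, Pi.sub_apply, Pi.add_apply, g]
    ring
  rw [hexpand, apply_sub_smul_one hν, map_add, map_smul, smul_eq_mul]
  linarith

theorem exists_null_apply_pos (hμ : μ ∈ (Ma1S S).extremePoints ℝ) (hν : ν ∈ Ma1S S)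
    (hne : ν ≠ μ) : ∃ g ∈ Icc (0 : S →ᵇ ℝ) 1, μ g = 0 ∧ 0 < ν g := by
  obtain ⟨f, hf⟩ := DFunLike.ne_iff.1 hne
  set h : S →ᵇ ℝ := f - μ f • 1
  have hμh : μ h = 0 := by rw [apply_sub_smul_one hμ.1, sub_self]
  have hνh : ν h ≠ 0 := by rwa [apply_sub_smul_one hν, sub_ne_zero]
  have hνhh : 0 < ν (h * h) := (sq_pos_of_ne_zero hνh).trans_le (sq_apply_le_apply_mul_self hν h)
  obtain ⟨ε, hε, hεh⟩ := exists_pos_mul_lt one_pos ‖h * h‖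
  refine ⟨ε • (h * h), ⟨fun x => mul_nonneg hε.le (zero_le_mul_self h x), fun x => ?_⟩, ?_, ?_⟩
  · rw [mul_comm] at hεh
    exact (mul_le_mul_of_nonneg_left ((h * h).apply_le_norm x) hε.le).trans hεh.le
  · rw [map_smul, map_mul_eq_zero_of_mem_extremePoints hμ hμh, smul_zero]
  · rw [map_smul]
    exact smul_pos hε hνhh

theorem exists_bidual_pos_of_mem_extremePoints (hμ : μ ∈ (Ma1S S).extremePoints ℝ) :
    ∃ ξ : StrongDual ℝ (StrongDual ℝ (S →ᵇ ℝ)), ξ μ = 0 ∧ ∀ ν ∈ Ma1S S, ν ≠ μ → 0 < ξ ν := by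
  obtain ⟨ξ, hξμ, hξ⟩ := exists_bidual_dominating_null (mem_iff.1 hμ.1).2 zero_le_one
  refine ⟨ξ, hξμ, fun ν hν hne => ?_⟩
  obtain ⟨g, hg, hμg, hνg⟩ := exists_null_apply_pos hμ hν hne
  exact hνg.trans_le (hξ ν (mem_iff.1 hν).2 g hg hμg)

end Ma1S

/-- For `μ ∈ M^a_1(S)`, `S` an arbitrary topological space, the
following are equivalent: (i) `μ` is an extreme point of `M^a_1(S)`;
(ii) `μ` is an exposed point of `M^a_1(S)`, i.e. some `ξ` in the bidual attains its
strict minimum on `M^a_1(S)` at `μ`; (iii) some `ξ` in the bidual vanishes at `μ`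
and is strictly positive on `M^a_1(S) \ {μ}`. -/
theorem statement13 {S : Type*} [TopologicalSpace S]
    (μ : (S →ᵇ ℝ) →L[ℝ] ℝ) (hμ : μ ∈ Ma1S S) :
    (μ ∈ Set.extremePoints ℝ (Ma1S S) ↔
      ∃ ξ : ((S →ᵇ ℝ) →L[ℝ] ℝ) →L[ℝ] ℝ, ∀ ν ∈ Ma1S S, ν ≠ μ → ξ μ < ξ ν) ∧
    (μ ∈ Set.extremePoints ℝ (Ma1S S) ↔
      ∃ ξ : ((S →ᵇ ℝ) →L[ℝ] ℝ) →L[ℝ] ℝ, ξ μ = 0 ∧ ∀ ν ∈ Ma1S S, ν ≠ μ → 0 < ξ ν) := by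
  have strictMin_of_pos : (∃ ξ : ((S →ᵇ ℝ) →L[ℝ] ℝ) →L[ℝ] ℝ,
      ξ μ = 0 ∧ ∀ ν ∈ Ma1S S, ν ≠ μ → 0 < ξ ν) →
      ∃ ξ : ((S →ᵇ ℝ) →L[ℝ] ℝ) →L[ℝ] ℝ, ∀ ν ∈ Ma1S S, ν ≠ μ → ξ μ < ξ ν :=
    fun ⟨ξ, hξμ, hξ⟩ => ⟨ξ, by rwa [hξμ]⟩
  have extreme_of_strictMin : (∃ ξ : ((S →ᵇ ℝ) →L[ℝ] ℝ) →L[ℝ] ℝ,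
      ∀ ν ∈ Ma1S S, ν ≠ μ → ξ μ < ξ ν) → μ ∈ Set.extremePoints ℝ (Ma1S S) :=
    fun h => exposedPoints_subset_extremePoints (mem_exposedPoints_iff_exists_lt.2 ⟨hμ, h⟩)
  exact ⟨⟨fun h => strictMin_of_pos (Ma1S.exists_bidual_pos_of_mem_extremePoints h),
      extreme_of_strictMin⟩,
    Ma1S.exists_bidual_pos_of_mem_extremePoints, fun h => extreme_of_strictMin (strictMin_of_pos h)⟩
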